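/- (Weak Lüders rule as entropic projection.) Let {P_1,…,P_n} ⊆ M_d(ℂ) be projections with P_i·P_j = δ_ij·P_i for all i,j and P_1 + … + P_n = 1, let ψ be a positive definite density matrix, and let Q_L := { φ : φ is a positive definite density matrix and φ·P_i = P_i·φ for all i }. Set ρ := Σ_{i=1}^n P_i·ψ·P_i. Then ρ ∈ Q_L, and ρ is the unique minimiser of D₀(·,ψ) on Q_L: for every φ ∈ Q_L, D₀(ρ,ψ) ≤ D₀(φ,ψ), with equality if and only if φ = ρ. -/

import Mathlib

/-!
Write `ρ = ∑ i, P i * ψ * P i`. If `L` commutes with every `P i`, then `tr (ρ L) = tr (ψ L)`.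
Both `log ρ` and `log φ`, for `φ` in `Q_L`, are such `L`, which gives the Pythagorean identity
`D₀(φ, ψ) = D₀(ρ, ψ) + D₀(φ, ρ)`. The last term is nonnegative and vanishes only for `φ = ρ` by
Klein's inequality, which in the eigenbases `u`, `v` of `A` and `B`, with eigenvalues `a`, `b`,
is the termwise nonnegativity of
`S(A‖B) - tr A + tr B = ∑ i j, b j * klFun (a i / b j) * ‖⟪u i, v j⟫‖ ^ 2`, where
`S(A‖B) = D₀(B, A)` and `klFun x = x * log x + 1 - x`.
-/

open Matrix
open scoped ComplexOrder

/-- Matrix logarithm: the real logarithm applied via the continuous functional calculus. -/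
noncomputable def matLog {d : ℕ} (A : Matrix (Fin d) (Fin d) ℂ) : Matrix (Fin d) (Fin d) ℂ :=
  cfc Real.log A

/-- The Umegaki distance `D₀(φ,ψ) := Re (tr (ψ · (log ψ − log φ)))`. -/
noncomputable def umegakiD0 {d : ℕ} (φ ψ : Matrix (Fin d) (Fin d) ℂ) : ℝ :=
  (Matrix.trace (ψ * (matLog ψ - matLog φ))).re

open RCLike InformationTheory

section Pinching

variable {ι R : Type*} [Fintype ι]

/-- The pinching `a ↦ ∑ i, P i * a * P i` by a finite family `P`, i.e. the state after a
nonselective Lüders measurement; meant for families of orthogonal projections summing to `1`. -/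
def pinching [NonUnitalNonAssocSemiring R] (P : ι → R) (a : R) : R :=
  ∑ i, P i * a * P i

lemma commute_pinching [Semiring R] {P : ι → R} (hP : OrthogonalIdempotents P) (a : R) (j : ι) :
    Commute (pinching P a) (P j) := by
  classical
  calc
    pinching P a * P j = P j * a * P j := by
      simp [pinching, Finset.sum_mul, mul_assoc, hP.mul_eq]
    _ = P j * pinching P a := by
      simp [pinching, Finset.mul_sum, ← mul_assoc, hP.mul_eq]

variable {m : Type*} [Fintype m] [DecidableEq m]

lemma trace_pinching_mul [CommSemiring R] {P : ι → Matrix m m R}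
    (hP : CompleteOrthogonalIdempotents P) (A : Matrix m m R) {L : Matrix m m R}
    (hL : ∀ i, Commute L (P i)) :
    (pinching P A * L).trace = (A * L).trace := by
  have trace_block (i : ι) : (P i * A * P i * L).trace = (A * L * P i).trace := calc
    (P i * A * P i * L).trace = (A * (P i * L) * P i).trace := by
      rw [mul_assoc (P i * A), mul_assoc (P i), trace_mul_comm]
    _ = (A * L * P i).trace := by
      rw [← (hL i).eq, mul_assoc, mul_assoc L, (hP.idem i).eq, mul_assoc]
  simp only [pinching, Finset.sum_mul, trace_sum, trace_block]
  rw [← trace_sum, ← Finset.mul_sum, hP.complete, mul_one]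

lemma trace_pinching [CommSemiring R] {P : ι → Matrix m m R} (hP : CompleteOrthogonalIdempotents P)
    (A : Matrix m m R) : (pinching P A).trace = A.trace := by
  simpa using trace_pinching_mul hP A fun i ↦ Commute.one_left (P i)

lemma posDef_pinching {𝕜 : Type*} [RCLike 𝕜] {P : ι → Matrix m m 𝕜}
    (hP : ∀ i, (P i).IsHermitian) (hsum : ∑ i, P i = 1) {A : Matrix m m 𝕜} (hA : A.PosDef) :
    (pinching P A).PosDef := by
  have block_posSemidef (i : ι) : (P i * A * P i).PosSemidef := by
    simpa only [(hP i).eq] using hA.posSemidef.conjTranspose_mul_mul_same (P i)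
  refine .of_dotProduct_mulVec_pos (posSemidef_sum _ fun i _ ↦ block_posSemidef i).isHermitian
    fun x hx ↦ ?_
  obtain ⟨i, hi⟩ : ∃ i, P i *ᵥ x ≠ 0 := by
    by_contra! h
    refine hx ?_
    rw [← one_mulVec x, ← hsum, sum_mulVec, Finset.sum_eq_zero fun i _ ↦ h i]
  have block_pos : 0 < star x ⬝ᵥ (P i * A * P i) *ᵥ x := by
    simpa only [star_mulVec, (hP i).eq, ← dotProduct_mulVec, mulVec_mulVec, mul_assoc]
      using hA.dotProduct_mulVec_pos hi
  rw [pinching, sum_mulVec, dotProduct_sum]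
  exact Finset.sum_pos' (fun j _ ↦ (block_posSemidef j).dotProduct_mulVec_nonneg x)
    ⟨i, Finset.mem_univ i, block_pos⟩

end Pinching

variable {𝕜 m : Type*} [RCLike 𝕜] [Fintype m] [DecidableEq m]

section EigenOverlap

variable {A B : Matrix m m 𝕜}

/-- The transition weight `‖⟪u i, v j⟫‖ ^ 2` between the chosen orthonormal eigenbases `u` of `A`
and `v` of `B`, encoded as an entry of the change of basis matrix. -/
noncomputable def eigenOverlap (hA : A.IsHermitian) (hB : B.IsHermitian) (i j : m) : ℝ :=
  ‖((hA.eigenvectorUnitary : Matrix m m 𝕜)ᴴ * hB.eigenvectorUnitary) i j‖ ^ 2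

lemma eigenOverlap_nonneg (hA : A.IsHermitian) (hB : B.IsHermitian) (i j : m) :
    0 ≤ eigenOverlap hA hB i j :=
  sq_nonneg _

lemma re_trace_cfc_mul_cfc (hA : A.IsHermitian) (hB : B.IsHermitian) (f g : ℝ → ℝ) :
    re (cfc f A * cfc g B).trace = ∑ i, ∑ j,
      f (hA.eigenvalues i) * g (hB.eigenvalues j) * eigenOverlap hA hB i j := by
  set U := (hA.eigenvectorUnitary : Matrix m m 𝕜)
  set V := (hB.eigenvectorUnitary : Matrix m m 𝕜)
  set a : m → 𝕜 := fun i ↦ (f (hA.eigenvalues i) : 𝕜)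
  set b : m → 𝕜 := fun j ↦ (g (hB.eigenvalues j) : 𝕜)
  have cfc_A : cfc f A = U * diagonal a * Uᴴ := hA.cfc_eq f
  have cfc_B : cfc g B = V * diagonal b * Vᴴ := hB.cfc_eq g
  have trace_eq : (cfc f A * cfc g B).trace =
      (diagonal a * (Uᴴ * V) * (diagonal b * (Uᴴ * V)ᴴ)).trace := by
    rw [cfc_A, cfc_B, mul_assoc U, mul_assoc U, trace_mul_comm U]
    simp only [conjTranspose_mul, conjTranspose_conjTranspose, mul_assoc]
  have entry_eq (i j : m) :
      a i * (Uᴴ * V) i j * (b j * star ((Uᴴ * V) i j)) =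
        ((f (hA.eigenvalues i) * g (hB.eigenvalues j) * eigenOverlap hA hB i j : ℝ) : 𝕜) := by
    rw [mul_mul_mul_comm, star_def, RCLike.mul_conj]
    simp only [a, b, U, V, eigenOverlap, map_mul, map_pow]
  simp_rw [trace_eq, trace, diag, mul_apply (M := diagonal a * _), diagonal_mul,
    conjTranspose_apply, entry_eq, ← ofReal_sum, ofReal_re]

lemma re_trace_cfc_left (hA : A.IsHermitian) (hB : B.IsHermitian) (f : ℝ → ℝ) :
    re (cfc f A).trace = ∑ i, ∑ j, f (hA.eigenvalues i) * eigenOverlap hA hB i j := by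
  simpa [cfc_const_one ℝ B hB.isSelfAdjoint] using re_trace_cfc_mul_cfc hA hB f fun _ ↦ 1

lemma re_trace_cfc_right (hA : A.IsHermitian) (hB : B.IsHermitian) (g : ℝ → ℝ) :
    re (cfc g B).trace = ∑ i, ∑ j, g (hB.eigenvalues j) * eigenOverlap hA hB i j := by
  simpa [cfc_const_one ℝ A hA.isSelfAdjoint] using re_trace_cfc_mul_cfc hA hB (fun _ ↦ 1) g

lemma re_trace_sub_mul_self (hA : A.IsHermitian) (hB : B.IsHermitian) :
    re ((A - B) * (A - B)).trace =
      ∑ i, ∑ j, (hA.eigenvalues i - hB.eigenvalues j) ^ 2 * eigenOverlap hA hB i j := by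
  have trace_sq_A := re_trace_cfc_left hA hB (· ^ 2)
  have trace_sq_B := re_trace_cfc_right hA hB (· ^ 2)
  have trace_mul := re_trace_cfc_mul_cfc hA hB id id
  rw [cfc_pow_id A 2 hA.isSelfAdjoint] at trace_sq_A
  rw [cfc_pow_id B 2 hB.isSelfAdjoint] at trace_sq_B
  rw [cfc_id ℝ A hA.isSelfAdjoint, cfc_id ℝ B hB.isSelfAdjoint] at trace_mul
  calc
    re ((A - B) * (A - B)).trace
      = re (A ^ 2).trace - 2 * re (A * B).trace + re (B ^ 2).trace := by
        simp only [sub_mul, mul_sub, trace_sub, map_sub, trace_mul_comm B A, pow_two]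
        ring
    _ = ∑ i, ∑ j, (hA.eigenvalues i - hB.eigenvalues j) ^ 2 * eigenOverlap hA hB i j := by
        simp only [trace_sq_A, trace_mul, trace_sq_B, Finset.mul_sum, ← Finset.sum_sub_distrib,
          ← Finset.sum_add_distrib, id]
        congr! 2
        ring

lemma eq_of_forall_eigenvalues_eq_or_eigenOverlap_eq_zero (hA : A.IsHermitian)
    (hB : B.IsHermitian)
    (h : ∀ i j, hA.eigenvalues i = hB.eigenvalues j ∨ eigenOverlap hA hB i j = 0) : A = B := by
  have sum_eq_zero :
      ∑ i, ∑ j, (hA.eigenvalues i - hB.eigenvalues j) ^ 2 * eigenOverlap hA hB i j = 0 :=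
    Finset.sum_eq_zero fun i _ ↦ Finset.sum_eq_zero fun j _ ↦ by
      rcases h i j with hij | hij <;> simp [hij]
  have re_trace_eq_zero : re ((A - B)ᴴ * (A - B)).trace = 0 := by
    rw [(hA.sub hB).eq, re_trace_sub_mul_self hA hB, sum_eq_zero]
  have trace_nonneg := (posSemidef_conjTranspose_mul_self (A - B)).trace_nonneg
  rw [← sub_eq_zero, ← trace_conjTranspose_mul_self_eq_zero_iff]
  exact RCLike.ext (by simpa using re_trace_eq_zero)
    (by simpa using (RCLike.nonneg_iff.1 trace_nonneg).2)

end EigenOverlap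

section RelativeEntropy

/-- The Umegaki relative entropy `S(A‖B) = Re tr (A (log A - log B))` over `ℝ` or `ℂ`, so that
`umegakiD0 φ ψ = S(ψ‖φ)`. Since `Real.log 0 = 0`, it has its usual meaning for positive
semidefinite `A` and `B` such that the kernel of `A` contains that of `B`. -/
noncomputable def umegakiRelEntropy (A B : Matrix m m 𝕜) : ℝ :=
  re (A * (cfc Real.log A - cfc Real.log B)).trace

variable {A B : Matrix m m 𝕜}

lemma mul_klFun_div (a : ℝ) {b : ℝ} (hb : b ≠ 0) :
    b * klFun (a / b) = a * Real.log a - a * Real.log b - a + b := by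
  rcases eq_or_ne a 0 with rfl | ha
  · simp [klFun_zero]
  · rw [klFun_apply, Real.log_div ha hb]
    field_simp
    ring

lemma umegakiRelEntropy_eq_add_sum_klFun (hA : A.IsHermitian) (hB : B.PosDef) :
    umegakiRelEntropy A B = re (A - B).trace + ∑ i, ∑ j,
      hB.1.eigenvalues j * klFun (hA.eigenvalues i / hB.1.eigenvalues j) *
        eigenOverlap hA hB.1 i j := by
  have trace_A := re_trace_cfc_left hA hB.1 id
  have trace_B := re_trace_cfc_right hA hB.1 id
  have trace_log_A := re_trace_cfc_left hA hB.1 fun x ↦ x * Real.log x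
  have trace_log_B := re_trace_cfc_mul_cfc hA hB.1 id Real.log
  rw [cfc_mul _ _ A (A.finite_real_spectrum.continuousOn _) (A.finite_real_spectrum.continuousOn _),
    cfc_id' ℝ A hA.isSelfAdjoint] at trace_log_A
  rw [cfc_id ℝ A hA.isSelfAdjoint] at trace_A trace_log_B
  rw [cfc_id ℝ B hB.1.isSelfAdjoint] at trace_B
  simp only [umegakiRelEntropy, mul_sub, trace_sub, map_sub, trace_A, trace_B, trace_log_A,
    trace_log_B, mul_klFun_div _ (hB.eigenvalues_pos _).ne', ← Finset.sum_sub_distrib,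
    ← Finset.sum_add_distrib, id]
  congr! 2
  ring

lemma mul_klFun_mul_eigenOverlap_nonneg (hA : A.PosSemidef) (hB : B.PosDef) (i j : m) :
    0 ≤ hB.1.eigenvalues j * klFun (hA.1.eigenvalues i / hB.1.eigenvalues j) *
      eigenOverlap hA.1 hB.1 i j :=
  have hb := (hB.eigenvalues_pos j).le
  mul_nonneg (mul_nonneg hb (klFun_nonneg (div_nonneg (hA.eigenvalues_nonneg i) hb)))
    (eigenOverlap_nonneg hA.1 hB.1 i j)

theorem re_trace_sub_le_umegakiRelEntropy (hA : A.PosSemidef) (hB : B.PosDef) :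
    re (A - B).trace ≤ umegakiRelEntropy A B := by
  rw [umegakiRelEntropy_eq_add_sum_klFun hA.1 hB]
  exact le_add_of_nonneg_right <| Finset.sum_nonneg fun i _ ↦ Finset.sum_nonneg fun j _ ↦
    mul_klFun_mul_eigenOverlap_nonneg hA hB i j

theorem umegakiRelEntropy_eq_re_trace_sub_iff (hA : A.PosSemidef) (hB : B.PosDef) :
    umegakiRelEntropy A B = re (A - B).trace ↔ A = B := by
  refine ⟨fun h ↦ ?_, fun h ↦ by simp [umegakiRelEntropy, h]⟩
  have hnonneg := mul_klFun_mul_eigenOverlap_nonneg hA hB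
  rw [umegakiRelEntropy_eq_add_sum_klFun hA.1 hB, add_eq_left,
    Finset.sum_eq_zero_iff_of_nonneg fun i _ ↦ Finset.sum_nonneg fun j _ ↦ hnonneg i j] at h
  refine eq_of_forall_eigenvalues_eq_or_eigenOverlap_eq_zero hA.1 hB.1 fun i j ↦ ?_
  have term_eq_zero := (Finset.sum_eq_zero_iff_of_nonneg fun j _ ↦ hnonneg i j).1
    (h i (Finset.mem_univ i)) j (Finset.mem_univ j)
  have hb := hB.eigenvalues_pos j
  refine (mul_eq_zero.1 term_eq_zero).imp_left fun hkl ↦ ?_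
  rwa [mul_eq_zero_iff_left hb.ne', klFun_eq_zero_iff (div_nonneg (hA.eigenvalues_nonneg i) hb.le),
    div_eq_one_iff_eq hb.ne'] at hkl

end RelativeEntropy

section Projection

variable {ι : Type*} [Fintype ι] {P : ι → Matrix m m 𝕜}

theorem umegakiRelEntropy_pythagorean (hP : CompleteOrthogonalIdempotents P) (ψ : Matrix m m 𝕜)
    {φ : Matrix m m 𝕜} (hφ : ∀ i, Commute φ (P i)) :
    umegakiRelEntropy ψ φ =
      umegakiRelEntropy ψ (pinching P ψ) + umegakiRelEntropy (pinching P ψ) φ := by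
  have trace_log_φ := trace_pinching_mul hP ψ fun i ↦ (hφ i).cfc_real Real.log
  have trace_log_ρ := trace_pinching_mul hP ψ fun i ↦
    (commute_pinching hP.toOrthogonalIdempotents ψ i).cfc_real Real.log
  simp only [umegakiRelEntropy, mul_sub, trace_sub, map_sub, trace_log_φ, trace_log_ρ]
  ring

theorem weak_lueders_entropic_projection_general (hP : CompleteOrthogonalIdempotents P)
    (hPH : ∀ i, (P i).IsHermitian) {ψ : Matrix m m 𝕜} (hψ : ψ.PosDef) {QL : Set (Matrix m m 𝕜)}
    (hQL : QL = {φ | φ.PosDef ∧ φ.trace = ψ.trace ∧ ∀ i, φ * P i = P i * φ}) :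
    pinching P ψ ∈ QL ∧
      ∀ φ ∈ QL,
        umegakiRelEntropy ψ (pinching P ψ) ≤ umegakiRelEntropy ψ φ ∧
          (umegakiRelEntropy ψ φ = umegakiRelEntropy ψ (pinching P ψ) ↔ φ = pinching P ψ) := by
  subst hQL
  have hρ : (pinching P ψ).PosDef := posDef_pinching hPH hP.complete hψ
  refine ⟨⟨hρ, trace_pinching hP ψ, commute_pinching hP.toOrthogonalIdempotents ψ⟩, ?_⟩
  rintro φ ⟨hφ, hφ_trace, hφ_comm⟩
  have trace_sub_eq_zero : re (pinching P ψ - φ).trace = 0 := by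
    rw [trace_sub, trace_pinching hP, hφ_trace, sub_self, map_zero]
  have klein := re_trace_sub_le_umegakiRelEntropy hρ.posSemidef hφ
  have klein_eq_iff := umegakiRelEntropy_eq_re_trace_sub_iff hρ.posSemidef hφ
  rw [trace_sub_eq_zero] at klein klein_eq_iff
  rw [umegakiRelEntropy_pythagorean hP ψ hφ_comm, add_eq_left, klein_eq_iff, eq_comm (a := φ)]
  exact ⟨le_add_of_nonneg_right klein, Iff.rfl⟩

end Projection

/-- Weak Lüders rule as entropic projection: given mutually orthogonal projections
`P 1, …, P n` summing to `1` and a positive definite density matrix `ψ`, the state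
`ρ := ∑ i, P i * ψ * P i` belongs to
`Q_L = {φ | φ positive definite density matrix, φ commutes with every P i}` and is the unique
minimiser of `D₀(·, ψ)` on `Q_L`. -/
theorem weak_lueders_entropic_projection {d n : ℕ} (hd : 1 ≤ d)
    (P : Fin n → Matrix (Fin d) (Fin d) ℂ)
    (hPH : ∀ i, (P i)ᴴ = P i)
    (horth : ∀ i j, P i * P j = if i = j then P i else 0)
    (hsum : ∑ i, P i = 1)
    (ψ : Matrix (Fin d) (Fin d) ℂ) (hψ : ψ.PosDef) (hψ1 : ψ.trace = 1)
    (QL : Set (Matrix (Fin d) (Fin d) ℂ))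
    (hQL : QL = {φ | φ.PosDef ∧ φ.trace = 1 ∧ ∀ i, φ * P i = P i * φ}) :
    (∑ i, P i * ψ * P i) ∈ QL ∧
      ∀ φ ∈ QL,
        umegakiD0 (∑ i, P i * ψ * P i) ψ ≤ umegakiD0 φ ψ ∧
          (umegakiD0 φ ψ = umegakiD0 (∑ i, P i * ψ * P i) ψ ↔ φ = ∑ i, P i * ψ * P i) := by
  have hP : CompleteOrthogonalIdempotents P := ⟨OrthogonalIdempotents.iff_mul_eq.2 horth, hsum⟩
  exact weak_lueders_entropic_projection_general hP hPH hψ (hψ1 ▸ hQL)
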